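/- Let 𝒢_imp = (𝒢, ∼) be an imperfect-information arena with secret set S ⊆ V₁ marked by the atomic proposition p_S (p_S ∈ val(v) iff v ∈ S). For every infinite play π: Plays_ω, π, 0 ⊨ G ¬ R p_S (with respect to the relation ≈) if and only if π is winning for Alice, i.e., no finite prefix ρ = π[0,i] with π[i] ∈ V₁ satisfies I(ρ) ⊆ S. -/

import Mathlib

namespace UniformStrategies

variable {V AP : Type}

/-- A two-player turn-based arena. -/
structure Arena (V : Type) (AP : Type) where
  V1 : Set V
  V2 : Set V
  union_eq : V1 ∪ V2 = Set.univ
  inter_empty : V1 ∩ V2 = ∅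
  E : V → V → Prop
  edges_ok : ∀ v w, E v w → (v ∈ V1 ∧ w ∈ V2) ∨ (v ∈ V2 ∧ w ∈ V1)
  v0 : V
  val : V → Set AP
  val_finite : ∀ v, (val v).Finite

namespace Arena

/-- A finite play: a nonempty finite path starting at `v0`. -/
def IsFinPlay (G : Arena V AP) (ρ : List V) : Prop :=
  ρ ≠ [] ∧ ρ.head? = some G.v0 ∧ ρ.Chain' G.E

/-- An infinite play: an infinite path starting at `v0`. -/
def IsInfPlay (G : Arena V AP) (π : ℕ → V) : Prop :=
  π 0 = G.v0 ∧ ∀ i, G.E (π i) (π (i + 1))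

/-- The set of all infinite plays `Plays_ω`. -/
def PlaysInf (G : Arena V AP) : Set (ℕ → V) := {π | G.IsInfPlay π}

end Arena

/-- The prefix `π[0,i]` of an infinite play. -/
def pref (π : ℕ → V) (i : ℕ) : List V := (List.range (i + 1)).map π

/-- RLTL formulas: `φ ::= p | ¬φ | φ∧ψ | ○φ | φ U ψ | R φ`. -/
inductive RLTL (AP : Type) : Type
  | atom : AP → RLTL AP
  | neg : RLTL AP → RLTL AP
  | and : RLTL AP → RLTL AP → RLTL AP
  | next : RLTL AP → RLTL AP
  | untl : RLTL AP → RLTL AP → RLTL AP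
  | R : RLTL AP → RLTL AP

namespace RLTL

def or (φ ψ : RLTL AP) : RLTL AP := .neg (.and (.neg φ) (.neg ψ))

def imp (φ ψ : RLTL AP) : RLTL AP := RLTL.or (.neg φ) ψ

/-- A tautology (built from the atom `p`). -/
def top (p : AP) : RLTL AP := RLTL.or (.atom p) (.neg (.atom p))

def bot (p : AP) : RLTL AP := .neg (RLTL.top p)

/-- The derived `always` operator `G φ := ¬(⊤ U ¬φ)`. -/
def always (p : AP) (φ : RLTL AP) : RLTL AP := .neg (.untl (RLTL.top p) (.neg φ))

/-- Finite disjunction. -/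
def bigOr (p : AP) (l : List (RLTL AP)) : RLTL AP := l.foldr RLTL.or (RLTL.bot p)

/-- A formula has no occurrence of the modality `R` (R-depth 0, pure LTL). -/
def RFree : RLTL AP → Prop
  | .atom _ => True
  | .neg φ => RFree φ
  | .and φ ψ => RFree φ ∧ RFree ψ
  | .next φ => RFree φ
  | .untl φ ψ => RFree φ ∧ RFree ψ
  | .R _ => False

end RLTL

/-- Satisfaction `U, π, i ⊨ φ` of an RLTL formula over the arena `G`, with
binary relation `rel` between finite plays, in the universe `U`. -/
def sat (G : Arena V AP) (rel : List V → List V → Prop) (U : Set (ℕ → V)) :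
    RLTL AP → (ℕ → V) → ℕ → Prop
  | .atom p, π, i => p ∈ G.val (π i)
  | .neg φ, π, i => ¬ sat G rel U φ π i
  | .and φ ψ, π, i => sat G rel U φ π i ∧ sat G rel U ψ π i
  | .next φ, π, i => sat G rel U φ π (i + 1)
  | .untl φ ψ, π, i =>
      ∃ j, i ≤ j ∧ sat G rel U ψ π j ∧ ∀ k, i ≤ k → k < j → sat G rel U φ π k
  | .R φ, π, i => ∀ π' ∈ U, ∀ j : ℕ, rel (pref π i) (pref π' j) → sat G rel U φ π' j

/-- A strategy for Player 1: a partial function from finite plays ending in `V1`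
to next positions along an edge. -/
structure Strategy1 (G : Arena V AP) where
  act : List V → Option V
  act_ok : ∀ ρ v, act ρ = some v →
    G.IsFinPlay ρ ∧ ∃ w, ρ.getLast? = some w ∧ w ∈ G.V1 ∧ G.E w v

/-- The outcome of a strategy: the set of infinite plays induced by it. -/
def Strategy1.out {G : Arena V AP} (σ : Strategy1 G) : Set (ℕ → V) :=
  {π | G.IsInfPlay π ∧ ∀ i, π i ∈ G.V1 → σ.act (pref π i) = some (π (i + 1))}

/-- `(rel,φ)`-strictly-uniform strategy. -/
def StrictlyUniform {G : Arena V AP} (rel : List V → List V → Prop)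
    (φ : RLTL AP) (σ : Strategy1 G) : Prop :=
  ∀ π ∈ σ.out, sat G rel σ.out φ π 0

/-- `(rel,φ)`-fully-uniform strategy. -/
def FullyUniform {G : Arena V AP} (rel : List V → List V → Prop)
    (φ : RLTL AP) (σ : Strategy1 G) : Prop :=
  ∀ π ∈ σ.out, sat G rel G.PlaysInf φ π 0

/-- Positions of an imperfect-information arena: Player 1 positions `v` and
Player 2 positions `(v, a)` for an action `a`. -/
abbrev GPos (Q Act : Type) := Q ⊕ Q × Act

/-- An imperfect-information arena `(𝒢, ∼)`: Player 1 positions are of the form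
`v`, Player 2 positions of the form `(v,a)`, `v E (v',a)` implies `v = v'`,
`v₀ ∈ V₁`, and `∼` is an equivalence relation on Player 1 positions. -/
structure ImpArena (Q Act AP : Type) where
  G : Arena (GPos Q Act) AP
  V1_def : G.V1 = Set.range Sum.inl
  V2_def : G.V2 = Set.range Sum.inr
  v0_P1 : ∃ q : Q, G.v0 = Sum.inl q
  edge_act : ∀ (v v' : Q) (a : Act), G.E (Sum.inl v) (Sum.inr (v', a)) → v = v'
  sim : Q → Q → Prop
  sim_equiv : Equivalence sim

variable {Q Act : Type}

/-- Componentwise relation on positions: Player 1 positions are related iff they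
are `∼`-equivalent; Player 2 positions are related iff they carry the same action. -/
def posSim (M : ImpArena Q Act AP) : GPos Q Act → GPos Q Act → Prop
  | Sum.inl v, Sum.inl v' => M.sim v v'
  | Sum.inr (_, a), Sum.inr (_, a') => a = a'
  | _, _ => False

/-- The extension `≈` of `∼` to finite plays: plays of the same length, related
componentwise. -/
def playEquiv (M : ImpArena Q Act AP) (ρ ρ' : List (GPos Q Act)) : Prop :=
  List.Forall₂ (posSim M) ρ ρ'

/-- Bob's information set after a finite play `ρ`: the set of last positions of
finite plays `≈`-equivalent to `ρ`. -/
def infoSet {Q Act : Type} (M : ImpArena Q Act AP) (ρ : List (GPos Q Act)) :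
    Set (GPos Q Act) :=
  {v | ∃ ρ', M.G.IsFinPlay ρ' ∧ playEquiv M ρ ρ' ∧ ρ'.getLast? = some v}

theorem pref_getLast? {V : Type} (π : ℕ → V) (i : ℕ) : (pref π i).getLast? = some (π i) := by
  simp [pref, List.range_succ]

theorem pref_length {V : Type} (π : ℕ → V) (i : ℕ) : (pref π i).length = i + 1 := by
  simp [pref]

theorem pref_isFinPlay {V AP : Type} (G : Arena V AP) (π : ℕ → V) (hπ : G.IsInfPlay π) (i : ℕ) :
    G.IsFinPlay (pref π i) := by
  refine ⟨?_, ?_, ?_⟩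
  · simp [pref]
  · simp [pref, List.range_succ_eq_map, hπ.1]
  · show List.IsChain G.E (pref π i)
    rw [List.isChain_iff_getElem]
    intro j hj
    simpa [pref] using hπ.2 j

theorem posSim_refl {Q Act AP : Type} (M : ImpArena Q Act AP) (v : GPos Q Act) :
    posSim M v v := by
  rcases v with v | ⟨v, a⟩
  · exact M.sim_equiv.refl v
  · rfl

theorem sat_R_iff {Q Act AP : Type} (M : ImpArena Q Act AP)
    (S : Set Q) (pS : AP)
    (hval : ∀ v : GPos Q Act, pS ∈ M.G.val v ↔ v ∈ Sum.inl '' S)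
    (hext : ∀ ρ, M.G.IsFinPlay ρ →
      ∃ π, M.G.IsInfPlay π ∧ pref π (ρ.length - 1) = ρ)
    (π : ℕ → GPos Q Act) (hπ : M.G.IsInfPlay π) (i : ℕ) :
    sat M.G (playEquiv M) M.G.PlaysInf (RLTL.R (.atom pS)) π i ↔
      π i ∈ M.G.V1 ∧ infoSet M (pref π i) ⊆ Sum.inl '' S := by
  simp only [sat]
  constructor
  · intro h
    constructor
    · have h1 := (hval _).1 (h π hπ i (List.forall₂_same.2 fun v _ => posSim_refl M v))
      rw [M.V1_def]
      obtain ⟨q, _, hq⟩ := h1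
      exact ⟨q, hq⟩
    · rintro v ⟨ρ, hρ, heq, hlast⟩
      obtain ⟨π', hπ', hp⟩ := hext ρ hρ
      have h1 := (hval _).1 (h π' hπ' (ρ.length - 1) (by rw [hp]; exact heq))
      rw [← hp, pref_getLast?] at hlast
      simp only [Option.some.injEq] at hlast
      rwa [hlast] at h1
  · rintro ⟨_, h⟩ π' hπ' j hrel
    exact (hval _).2 (h ⟨pref π' j, pref_isFinPlay _ _ hπ' j, hrel, pref_getLast? _ _⟩)

/-- In an imperfect-information arena with a secret set `S ⊆ V₁`
marked by `p_S`, for every infinite play `π`: `Plays_ω, π, 0 ⊨ G ¬ R p_S` (w.r.t. `≈`)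
iff `π` is winning for Alice, i.e. no finite prefix `ρ = π[0,i]` with `π[i] ∈ V₁`
satisfies `I(ρ) ⊆ S`. -/
theorem sat_G_not_R_secret_iff_winning_for_Alice
    {Q Act AP : Type} [Fintype Act] (M : ImpArena Q Act AP)
    (S : Set Q) (pS : AP)
    (hval : ∀ v : GPos Q Act, pS ∈ M.G.val v ↔ v ∈ Sum.inl '' S)
    (hext : ∀ ρ, M.G.IsFinPlay ρ →
      ∃ π, M.G.IsInfPlay π ∧ pref π (ρ.length - 1) = ρ)
    (π : ℕ → GPos Q Act) (hπ : M.G.IsInfPlay π) :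
    sat M.G (playEquiv M) M.G.PlaysInf
        (RLTL.always pS (RLTL.neg (RLTL.R (.atom pS)))) π 0 ↔
      ∀ i : ℕ, π i ∈ M.G.V1 → ¬ infoSet M (pref π i) ⊆ Sum.inl '' S := by
  have key := sat_R_iff M S pS hval hext π hπ
  constructor
  · intro h i hi hsub
    refine h ⟨i, Nat.zero_le _, ?_, ?_⟩
    · exact fun hn => hn ((key i).2 ⟨hi, hsub⟩)
    · intro k _ _
      simp only [RLTL.top, RLTL.or, sat]
      tauto
  · rintro h ⟨i, _, hi, _⟩
    have hi' := (key i).1 (Classical.not_not.1 hi)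
    exact h i hi'.1 hi'.2

end UniformStrategies
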